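/- A finite semigroup S (viewed as a profinite semigroup with the discrete topology) is a KR-cover if and only if there exist a finite alphabet A, an onto homomorphism ψ : A⁺ → S, and a homomorphism θ : S → S_ψ^KR with π_ψ∘θ = id_S. Moreover, if S is a KR-cover, then for every finite alphabet A and every onto homomorphism ψ : A⁺ → S such a homomorphism θ exists. -/

import Mathlib

/-!
Everything rests on functoriality of the two-sided Karnofsky–Rhodes expansion. Suppose given
`ψ : A⁺ → S`, `χ : B⁺ → T`, `φ : S → T` and `f : A⁺ → B⁺` with `χ ∘ f = φ ∘ ψ`. Applying `φ` to both
coordinates of vertices and replacing an edge labelled `a` by the path labelled `f a` sends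
directed paths of `Γ_ψ` to directed paths of `Γ_χ`, and sends `p_u` to `p_{f u}`. If an edge of
`p_u` lies on a closed path, so do all edges of the path replacing it; hence the transition edges
of `p_{f u}` all come from transition edges of `p_u`, and `T(p_{f u})` is determined by `T(p_u)`
(`transEdges_map`). So `f` induces a homomorphism `S_ψ^KR → T_χ^KR` lying over `φ`. When `χ` is onto,
a suitable `f` exists for every `φ`, because `A⁺` is free (`exists_transfer`).

A splitting `θ` of one expansion of `S` can therefore be composed with the induced homomorphism.
With `T` an image of `S`, this shows that `S` is a KR-cover; with `φ = id`, it splits every other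
expansion of `S`. Conversely, the KR-cover condition for `T = S` and `φ = id` is a splitting.

The KR-cover condition also requires that every finite `T` have some expansion (`exists_KRData`).
Here `≡_ψ` is a congruence because `p_{uv}` is the concatenation of the translates of `p_u` and `p_v`
by `ψ v` on the right and by `ψ u` on the left (`transEdges_mul`), and it has finite index because
`Γ_ψ` has finitely many edges.
-/

set_option autoImplicit false

/-! ### General notions: topological semigroups, pseudovarieties, pro-V semigroups -/

/-- Continuity of a map into a type regarded with the discrete topology. -/
def ContinuousDisc {S : Type} [TopologicalSpace S] {T : Type} (f : S → T) : Prop :=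
  @Continuous S T _ ⊥ f

/-- A pseudovariety of semigroups: a class of finite semigroups closed under
homomorphic images, subsemigroups and finite direct products. -/
structure Pseudovariety : Type 1 where
  Mem : ∀ (S : Type) [Semigroup S], Prop
  finite : ∀ (S : Type) [Semigroup S], Mem S → Finite S
  closed_hom : ∀ (S T : Type) [Semigroup S] [Semigroup T] (f : S →ₙ* T),
    Mem S → Function.Surjective f → Mem T
  closed_sub : ∀ (S T : Type) [Semigroup S] [Semigroup T] (f : T →ₙ* S),
    Mem S → Function.Injective f → Mem T
  closed_prod : ∀ (ι : Type) [Finite ι] (S : ι → Type) [∀ i, Semigroup (S i)],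
    (∀ i, Mem (S i)) → Mem (∀ i, S i)

/-- A bundled member of a pseudovariety `V` (a finite semigroup belonging to `V`),
always regarded as carrying the discrete topology. -/
structure SgrIn (V : Pseudovariety) : Type 1 where
  carrier : Type
  [str : Semigroup carrier]
  mem : V.Mem carrier

attribute [instance] SgrIn.str

/-- A (bundled) topological semigroup. -/
structure TopSgr : Type 1 where
  carrier : Type
  [str : Semigroup carrier]
  [top : TopologicalSpace carrier]

attribute [instance] TopSgr.str TopSgr.top

/-- A finite semigroup regarded as a topological semigroup with the discrete topology. -/
def discTopSgr (S : Type) [Semigroup S] : TopSgr :=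
  @TopSgr.mk S _ ⊥

/-- A pro-V semigroup: a compact Hausdorff topological semigroup that is residually `V`. -/
def IsProV (V : Pseudovariety) (S : TopSgr) : Prop :=
  CompactSpace S.carrier ∧ T2Space S.carrier ∧ ContinuousMul S.carrier ∧
    ∀ x y : S.carrier, x ≠ y → ∃ (F : SgrIn V) (f : S.carrier →ₙ* F.carrier),
      ContinuousDisc ⇑f ∧ f x ≠ f y

/-- A profinite semigroup: a compact Hausdorff totally disconnected topological semigroup. -/
def IsProfiniteSgr (S : TopSgr) : Prop :=
  CompactSpace S.carrier ∧ T2Space S.carrier ∧ TotallyDisconnectedSpace S.carrier ∧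
    ContinuousMul S.carrier

/-- `C`, together with the continuous homomorphisms `φ i`, is a `V`-coproduct of the
family `S` of pro-`V` semigroups. -/
structure IsCoproduct (V : Pseudovariety) {I : Type} (S : I → TopSgr)
    (C : TopSgr) (φ : ∀ i, (S i).carrier →ₙ* C.carrier) : Prop where
  proV : IsProV V C
  cont : ∀ i, Continuous ⇑(φ i)
  universal : ∀ (T : TopSgr), IsProV V T →
    ∀ ψ : ∀ i, (S i).carrier →ₙ* T.carrier, (∀ i, Continuous ⇑(ψ i)) →
      ∃! Ψ : C.carrier →ₙ* T.carrier, Continuous ⇑Ψ ∧ ∀ i, Ψ.comp (φ i) = ψ i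

/-- `P`, together with the homomorphisms `e i`, is a free product (coproduct in the
category of semigroups) of the family `S`. -/
structure IsFreeProduct {I : Type} (S : I → Type) [∀ i, Semigroup (S i)]
    (P : Type) [Semigroup P] (e : ∀ i, S i →ₙ* P) : Prop where
  universal : ∀ (T : Type) [Semigroup T] (f : ∀ i, S i →ₙ* T),
    ∃! F : P →ₙ* T, ∀ i, F.comp (e i) = f i

/-! ### Particular pseudovarieties and related notions -/

/-- `V` contains the pseudovariety `Sl` of finite semilattices. -/
def ContainsSl (V : Pseudovariety) : Prop :=
  ∀ (S : Type) [Semigroup S] [Finite S],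
    (∀ x y : S, x * y = y * x) → (∀ x : S, x * x = x) → V.Mem S

/-- Green's `J`-preorder: `s ≤_J t`, i.e. `s ∈ S^I t S^I`. -/
def JBelow {S : Type} [Semigroup S] (s t : S) : Prop :=
  ∃ x y : WithOne S, x * (t : WithOne S) * y = (s : WithOne S)

/-- `V` contains the pseudovariety `J` of finite `J`-trivial semigroups. -/
def ContainsJ (V : Pseudovariety) : Prop :=
  ∀ (S : Type) [Semigroup S] [Finite S],
    (∀ s t : S, JBelow s t → JBelow t s → s = t) → V.Mem S

/-- The preimage of an idempotent under a semigroup homomorphism, as a subsemigroup. -/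
def fiberSub {S T : Type} [Semigroup S] [Semigroup T] (ψ : S →ₙ* T) (e : T)
    (he : e * e = e) : Subsemigroup S where
  carrier := ⇑ψ ⁻¹' {e}
  mul_mem' := by
    intro a b ha hb
    simp only [Set.mem_preimage, Set.mem_singleton_iff] at *
    rw [map_mul, ha, hb, he]

/-- The set of products of `n+1` elements of a semigroup (so `nthProds S 0 = S`). -/
def nthProds (S : Type) [Semigroup S] : ℕ → Set S
  | 0 => Set.univ
  | n + 1 => {x | ∃ a y, y ∈ nthProds S n ∧ x = a * y}

/-- A nilpotent semigroup: it has a zero `z` and some power of the semigroup is `{z}`. -/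
def IsNilpotentSgr (S : Type) [Semigroup S] : Prop :=
  ∃ z : S, (∀ x : S, z * x = z ∧ x * z = z) ∧ ∃ n : ℕ, nthProds S n ⊆ {z}

/-- A generator of the Mal'cev product `N ⓜ V`: a finite semigroup admitting a surjective
homomorphism onto a member of `V` all of whose idempotent fibers are nilpotent. -/
def NMalcevGen (V : Pseudovariety) (S : Type) [Semigroup S] : Prop :=
  Finite S ∧ ∃ (T : SgrIn V) (ψ : S →ₙ* T.carrier), Function.Surjective ψ ∧
    ∀ (e : T.carrier) (he : e * e = e), IsNilpotentSgr (fiberSub ψ e he)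

/-- The equality `N ⓜ V = V`: `V` coincides with the smallest pseudovariety containing
all finite semigroups admitting an `N`-morphism onto some member of `V`. -/
def NMalcevFixed (V : Pseudovariety) : Prop :=
  ∀ (S : Type) [Semigroup S] [Finite S],
    V.Mem S ↔ ∀ U : Pseudovariety,
      (∀ (S' : Type) [Semigroup S'], NMalcevGen V S' → U.Mem S') → U.Mem S

/-- A completely simple semigroup: simple with a primitive idempotent. -/
def IsCompletelySimple (S : Type) [Semigroup S] : Prop :=
  (∀ J : Set S, J.Nonempty → (∀ s x : S, x ∈ J → s * x ∈ J ∧ x * s ∈ J) → J = Set.univ) ∧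
  ∃ e : S, e * e = e ∧ ∀ f : S, f * f = f → e * f = f → f * e = f → f = e

/-- An equidivisible semigroup. -/
def Equidivisible (S : Type) [Semigroup S] : Prop :=
  ∀ u v x y : S, u * v = x * y →
    ∃ t : WithOne S,
      ((x : WithOne S) = (u : WithOne S) * t ∧ t * (y : WithOne S) = (v : WithOne S)) ∨
      ((x : WithOne S) * t = (u : WithOne S) ∧ (y : WithOne S) = t * (v : WithOne S))

/-! ### The two-sided Karnofsky–Rhodes expansion -/

/-- Vertices of the two-sided Cayley graph of `T`: pairs of elements of `T^I`. -/
abbrev KRVtx (T : Type) : Type := WithOne T × WithOne T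

/-- Edges of the two-sided Cayley graph: (source, label, target). -/
abbrev KREdge (A T : Type) : Type := KRVtx T × A × KRVtx T

/-- The image in `T^I` of a letter. -/
def letterImg {A T : Type} [Semigroup T] (ψ : FreeSemigroup A →ₙ* T) (a : A) : WithOne T :=
  (ψ (FreeSemigroup.of a) : WithOne T)

/-- The image in `T^I` of a (possibly empty) word. -/
def wordImg {A T : Type} [Semigroup T] (ψ : FreeSemigroup A →ₙ* T) (w : List A) : WithOne T :=
  (w.map (letterImg ψ)).prod

/-- `e` is an edge of the two-sided Cayley graph `Γ_ψ`. -/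
def IsKREdge {A T : Type} [Semigroup T] (ψ : FreeSemigroup A →ₙ* T) (e : KREdge A T) : Prop :=
  e.1.1 * letterImg ψ e.2.1 = e.2.2.1 ∧ e.1.2 = letterImg ψ e.2.1 * e.2.2.2

/-- One step along an edge of `Γ_ψ` (used to define directed paths). -/
def KRStep {A T : Type} [Semigroup T] (ψ : FreeSemigroup A →ₙ* T) (v w : KRVtx T) : Prop :=
  ∃ a : A, v.1 * letterImg ψ a = w.1 ∧ v.2 = letterImg ψ a * w.2

/-- A transition edge of `Γ_ψ`: an edge from whose target there is no directed path
back to its source. -/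
def IsTransEdge {A T : Type} [Semigroup T] (ψ : FreeSemigroup A →ₙ* T) (e : KREdge A T) : Prop :=
  IsKREdge ψ e ∧ ¬ Relation.ReflTransGen (KRStep ψ) e.2.2 e.1

/-- The list of letters of an element of the free semigroup. -/
def letters {A : Type} (u : FreeSemigroup A) : List A := u.head :: u.tail

/-- The set of edges of the path `p_u` of `Γ_ψ` from `(I, ψ u)` to `(ψ u, I)` labeled by `u`. -/
def pathEdges {A T : Type} [Semigroup T] (ψ : FreeSemigroup A →ₙ* T) (u : FreeSemigroup A) :
    Set (KREdge A T) :=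
  {e | ∃ (w₁ w₂ : List A) (a : A), letters u = w₁ ++ a :: w₂ ∧
    e = ((wordImg ψ w₁, wordImg ψ (a :: w₂)), a, (wordImg ψ (w₁ ++ [a]), wordImg ψ w₂))}

/-- The set `T(p_u)` of transition edges of `Γ_ψ` occurring in the path `p_u`. -/
def transEdges {A T : Type} [Semigroup T] (ψ : FreeSemigroup A →ₙ* T) (u : FreeSemigroup A) :
    Set (KREdge A T) :=
  {e ∈ pathEdges ψ u | IsTransEdge ψ e}

/-- A realization of the two-sided Karnofsky–Rhodes expansion of `ψ : A⁺ → T`: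
a semigroup `K = T_ψ^KR` together with the projection `ψ^KR : A⁺ → K`, which is onto and
identifies `u` and `v` exactly when `ψ u = ψ v` and `T(p_u) = T(p_v)`, and the canonical
homomorphism `π : T_ψ^KR → T` with `π ∘ ψ^KR = ψ`. -/
structure KRExp {A T : Type} [Semigroup T] (ψ : FreeSemigroup A →ₙ* T) : Type 1 where
  K : Type
  [strK : Semigroup K]
  [finK : Finite K]
  ψKR : FreeSemigroup A →ₙ* K
  π : K →ₙ* T
  surj : Function.Surjective ⇑ψKR
  ker : ∀ u v : FreeSemigroup A, ψKR u = ψKR v ↔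
    (ψ u = ψ v ∧ transEdges ψ u = transEdges ψ v)
  proj : π.comp ψKR = ψ

attribute [instance] KRExp.strK KRExp.finK

/-- The data of a two-sided Karnofsky–Rhodes expansion of a finite semigroup `T`:
a finite alphabet `A`, an onto homomorphism `ψ : A⁺ → T`, and a realization `T_ψ^KR`. -/
structure KRData (T : Type) [Semigroup T] : Type 1 where
  A : Type
  [finA : Finite A]
  ψ : FreeSemigroup A →ₙ* T
  surjψ : Function.Surjective ⇑ψ
  E : KRExp ψ

attribute [instance] KRData.finA

/-- `V` is closed under two-sided Karnofsky–Rhodes expansion. -/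
def ClosedUnderKR (V : Pseudovariety) : Prop :=
  ∀ (A T : Type) [Finite A] [Semigroup T], V.Mem T →
    ∀ (ψ : FreeSemigroup A →ₙ* T), Function.Surjective ⇑ψ →
      ∀ E : KRExp ψ, V.Mem E.K

/-! ### KR-covers -/

/-- `S` is a KR-cover of the finite semigroup `T`. -/
def IsKRCoverOf (S : TopSgr) (T : Type) [Semigroup T] [Finite T] : Prop :=
  (∃ φ : S.carrier →ₙ* T, ContinuousDisc ⇑φ ∧ Function.Surjective ⇑φ) ∧
  ∀ φ : S.carrier →ₙ* T, ContinuousDisc ⇑φ → Function.Surjective ⇑φ →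
    ∃ (D : KRData T) (φψ : S.carrier →ₙ* D.E.K),
      ContinuousDisc ⇑φψ ∧ D.E.π.comp φψ = φ

/-- `S` is a KR-cover: a KR-cover of each of its finite continuous homomorphic images. -/
def IsKRCover (S : TopSgr) : Prop :=
  ∀ (T : Type) [Semigroup T] [Finite T],
    (∃ φ : S.carrier →ₙ* T, ContinuousDisc ⇑φ ∧ Function.Surjective ⇑φ) →
    IsKRCoverOf S T

/-- `S` is `V`-projective. -/
def IsVProjective (V : Pseudovariety) (S : TopSgr) : Prop :=
  IsProV V S ∧ ∀ (T R : TopSgr), IsProV V T → IsProV V R →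
    ∀ (f : S.carrier →ₙ* T.carrier) (g : R.carrier →ₙ* T.carrier),
      Continuous ⇑f → Continuous ⇑g → Function.Surjective ⇑g →
        ∃ f' : S.carrier →ₙ* R.carrier, Continuous ⇑f' ∧ g.comp f' = f

/-! ### Strong KR-covers and letter super-cancellativity -/

/-- `κ : A → S` is a generating mapping: its image generates a dense subsemigroup. -/
def GeneratingMap {A : Type} (S : TopSgr) (κ : A → S.carrier) : Prop :=
  Dense (Subsemigroup.closure (Set.range κ) : Set S.carrier)

/-- The homomorphism `A⁺ → T` extending `a ↦ φ (κ a)`. -/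
def liftGen {A : Type} (S : TopSgr) (κ : A → S.carrier) {T : Type} [Semigroup T]
    (φ : S.carrier →ₙ* T) : FreeSemigroup A →ₙ* T :=
  FreeSemigroup.lift (fun a => φ (κ a))

/-- `S` is a strong KR-cover of the finite semigroup `T` with respect to the
generating mapping `κ`. -/
def IsStrongKRCoverOfWrt {A : Type} (S : TopSgr) (κ : A → S.carrier)
    (T : Type) [Semigroup T] [Finite T] : Prop :=
  ∀ φ : S.carrier →ₙ* T, ContinuousDisc ⇑φ → Function.Surjective ⇑φ →
    ∃ (E : KRExp (liftGen S κ φ)) (φκ : S.carrier →ₙ* E.K),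
      ContinuousDisc ⇑φκ ∧ E.π.comp φκ = φ ∧
      ∀ a : A, φκ (κ a) = E.ψKR (FreeSemigroup.of a)

/-- `S` is a strong KR-cover of the finite semigroup `T` (with respect to some
generating mapping with finite domain). -/
def IsStrongKRCoverOf (S : TopSgr) (T : Type) [Semigroup T] [Finite T] : Prop :=
  ∃ A : Type, Finite A ∧ ∃ κ : A → S.carrier, GeneratingMap S κ ∧
    IsStrongKRCoverOfWrt S κ T

/-- `S` is a strong KR-cover: a strong KR-cover of each of its finite continuous
homomorphic images. -/
def IsStrongKRCover (S : TopSgr) : Prop :=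
  ∀ (T : Type) [Semigroup T] [Finite T],
    (∃ φ : S.carrier →ₙ* T, ContinuousDisc ⇑φ ∧ Function.Surjective ⇑φ) →
    IsStrongKRCoverOf S T

/-- `S` is letter super-cancellative with respect to the subset `A` of `S`. -/
def IsLSC (S : TopSgr) (A : Set S.carrier) : Prop :=
  ∀ a ∈ A, ∀ b ∈ A, ∀ u v : WithOne S.carrier,
    (u * (a : WithOne S.carrier) = v * (b : WithOne S.carrier) → a = b ∧ u = v) ∧
    ((a : WithOne S.carrier) * u = (b : WithOne S.carrier) * v → a = b ∧ u = v)

/-! ### `S^I` and inverse limits -/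

/-- The sum topology on `S^I = S ∪ {I}`: the point `I` is isolated and `S` keeps
its topology. -/
def withOneTopology (S : Type) [TopologicalSpace S] : TopologicalSpace (WithOne S) where
  IsOpen V := IsOpen ((fun s : S => (s : WithOne S)) ⁻¹' V)
  isOpen_univ := by simp
  isOpen_inter := by
    intro U V hU hV
    rw [Set.preimage_inter]
    exact hU.inter hV
  isOpen_sUnion := by
    intro s hs
    rw [Set.preimage_sUnion]
    exact isOpen_biUnion hs

/-- `S^I` as a topological semigroup (in fact a monoid): `S` with an isolated identity
adjoined. -/
def withOneTopSgr (S : TopSgr) : TopSgr :=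
  @TopSgr.mk (WithOne S.carrier) _ (withOneTopology S.carrier)

/-- The inverse limit of a family of topological semigroups, as a subsemigroup of
the product. -/
def invLimSub {I : Type} [Preorder I] (S : I → TopSgr)
    (f : ∀ i j, j ≤ i → ((S i).carrier →ₙ* (S j).carrier)) :
    Subsemigroup (∀ i, (S i).carrier) where
  carrier := {x | ∀ i j (h : j ≤ i), f i j h (x i) = x j}
  mul_mem' := by
    intro a b ha hb i j h
    simp only [Pi.mul_apply, map_mul, ha i j h, hb i j h]

/-- The inverse limit as a topological semigroup (with the topology induced from the
product topology). -/
def invLimTopSgr {I : Type} [Preorder I] (S : I → TopSgr)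
    (f : ∀ i j, j ≤ i → ((S i).carrier →ₙ* (S j).carrier)) : TopSgr :=
  TopSgr.mk (invLimSub S f)

/-! ### Words and directed paths in `Γ_ψ` -/

section Words

variable {A T : Type} [Semigroup T] (ψ : FreeSemigroup A →ₙ* T)

theorem wordImg_nil : wordImg ψ [] = 1 := rfl

theorem wordImg_cons (a : A) (l : List A) :
    wordImg ψ (a :: l) = letterImg ψ a * wordImg ψ l := by
  simp [wordImg]

theorem wordImg_append (l₁ l₂ : List A) :
    wordImg ψ (l₁ ++ l₂) = wordImg ψ l₁ * wordImg ψ l₂ := by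
  simp [wordImg]

theorem letters_mul (u v : FreeSemigroup A) : letters (u * v) = letters u ++ letters v := rfl

theorem wordImg_letters (u : FreeSemigroup A) : wordImg ψ (letters u) = (ψ u : WithOne T) := by
  induction u using FreeSemigroup.recOnMul with
  | ih1 a =>
    change wordImg ψ [a] = _
    rw [wordImg_cons, wordImg_nil, mul_one]
    rfl
  | ih2 x y hx hy =>
    rw [letters_mul, wordImg_append, hx, hy, map_mul, WithOne.coe_mul]

/-- Every word labels a directed path of `Γ_ψ` from `(s, ψ(l) t)` to `(s ψ(l), t)`. -/
theorem reach_word (l : List A) (s t : WithOne T) :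
    Relation.ReflTransGen (KRStep ψ) (s, wordImg ψ l * t) (s * wordImg ψ l, t) := by
  induction l generalizing s with
  | nil => simpa [wordImg_nil] using Relation.ReflTransGen.refl
  | cons a l ih =>
    refine Relation.ReflTransGen.head
      (b := (s * letterImg ψ a, wordImg ψ l * t)) ⟨a, rfl, ?_⟩ ?_
    · simp [wordImg_cons, mul_assoc]
    · simpa [wordImg_cons, mul_assoc] using ih (s * letterImg ψ a)

theorem isKREdge_of_mem {u : FreeSemigroup A} {e : KREdge A T} (h : e ∈ pathEdges ψ u) :
    IsKREdge ψ e := by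
  obtain ⟨w₁, w₂, a, -, rfl⟩ := h
  exact ⟨by simp [wordImg_append, wordImg_cons, wordImg_nil], wordImg_cons ψ a w₂⟩

theorem mem_transEdges_iff {u : FreeSemigroup A} {e : KREdge A T} :
    e ∈ transEdges ψ u ↔
      e ∈ pathEdges ψ u ∧ ¬ Relation.ReflTransGen (KRStep ψ) e.2.2 e.1 :=
  ⟨fun h => ⟨h.1, h.2.2⟩, fun h => ⟨h.1, isKREdge_of_mem ψ h.1, h.2⟩⟩

/-! ### `≡_ψ` is a congruence of finite index -/

/-- The translate of an edge by `c` on the left and `d` on the right: sources and targets `(s, t)`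
become `(c s, t d)`. -/
def shiftEdge (c d : WithOne T) (e : KREdge A T) : KREdge A T :=
  ((c * e.1.1, e.1.2 * d), e.2.1, (c * e.2.2.1, e.2.2.2 * d))

theorem reach_shift (c d : WithOne T) {v w : KRVtx T}
    (h : Relation.ReflTransGen (KRStep ψ) v w) :
    Relation.ReflTransGen (KRStep ψ) (c * v.1, v.2 * d) (c * w.1, w.2 * d) := by
  induction h with
  | refl => exact .refl
  | tail _ hs ih =>
    obtain ⟨a, h₁, h₂⟩ := hs
    exact ih.tail ⟨a, by simp [mul_assoc, h₁], by simp [mul_assoc, h₂]⟩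

theorem pathEdges_mul (u v : FreeSemigroup A) :
    pathEdges ψ (u * v) =
      shiftEdge 1 (ψ v : WithOne T) '' pathEdges ψ u ∪
        shiftEdge (ψ u : WithOne T) 1 '' pathEdges ψ v := by
  ext e
  constructor
  · rintro ⟨w₁, w₂, a, hl, rfl⟩
    rw [letters_mul] at hl
    rcases List.append_eq_append_iff.1 hl with ⟨l, h₁, h₂⟩ | ⟨l, h₁, h₂⟩
    · right
      refine ⟨_, ⟨l, w₂, a, h₂, rfl⟩, ?_⟩
      simp [shiftEdge, h₁, ← wordImg_letters, wordImg_append, wordImg_cons]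
    · cases l with
      | nil =>
        right
        refine ⟨_, ⟨[], w₂, a, h₂.symm, rfl⟩, ?_⟩
        have h₃ : w₁ = letters u := by simpa using h₁.symm
        simp [shiftEdge, h₃, ← wordImg_letters, wordImg_append, wordImg_nil]
      | cons b l =>
        obtain ⟨rfl, rfl⟩ : a = b ∧ w₂ = l ++ letters v := by simpa using h₂
        left
        refine ⟨_, ⟨w₁, l, a, h₁, rfl⟩, ?_⟩
        simp [shiftEdge, ← wordImg_letters, wordImg_append, wordImg_cons, mul_assoc]
  · rintro (⟨_, ⟨w₁, w₂, a, hl, rfl⟩, rfl⟩ | ⟨_, ⟨w₁, w₂, a, hl, rfl⟩, rfl⟩)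
    · refine ⟨w₁, w₂ ++ letters v, a, by simp [letters_mul, hl], ?_⟩
      simp [shiftEdge, ← wordImg_letters, wordImg_append, wordImg_cons, mul_assoc]
    · refine ⟨letters u ++ w₁, w₂, a, by simp [letters_mul, hl], ?_⟩
      simp [shiftEdge, ← wordImg_letters, wordImg_append]

/-- A translate of a non-transition edge is not a transition edge, so `T(p_{uv})` is determined by
`ψ u`, `ψ v`, `T(p_u)` and `T(p_v)`. -/
theorem transEdges_mul (u v : FreeSemigroup A) :
    transEdges ψ (u * v) =
      {e ∈ shiftEdge 1 (ψ v : WithOne T) '' transEdges ψ u ∪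
        shiftEdge (ψ u : WithOne T) 1 '' transEdges ψ v |
          ¬ Relation.ReflTransGen (KRStep ψ) e.2.2 e.1} := by
  ext e
  rw [mem_transEdges_iff, pathEdges_mul]
  constructor
  · rintro ⟨⟨e, he, rfl⟩ | ⟨e, he, rfl⟩, h⟩
    · exact ⟨Or.inl ⟨e, (mem_transEdges_iff ψ).2 ⟨he, fun hr => h (reach_shift ψ _ _ hr)⟩, rfl⟩, h⟩
    · exact ⟨Or.inr ⟨e, (mem_transEdges_iff ψ).2 ⟨he, fun hr => h (reach_shift ψ _ _ hr)⟩, rfl⟩, h⟩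
  · rintro ⟨⟨e, he, rfl⟩ | ⟨e, he, rfl⟩, h⟩
    · exact ⟨Or.inl ⟨e, he.1, rfl⟩, h⟩
    · exact ⟨Or.inr ⟨e, he.1, rfl⟩, h⟩

/-- The congruence `≡_ψ` on `A⁺`. -/
def krCon : Con (FreeSemigroup A) where
  r u v := ψ u = ψ v ∧ transEdges ψ u = transEdges ψ v
  iseqv := ⟨fun _ => ⟨rfl, rfl⟩, fun h => ⟨h.1.symm, h.2.symm⟩,
    fun h h' => ⟨h.1.trans h'.1, h.2.trans h'.2⟩⟩
  mul' := by
    rintro u u' v v' ⟨h₁, h₂⟩ ⟨h₃, h₄⟩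
    exact ⟨by rw [map_mul, map_mul, h₁, h₃], by
      rw [transEdges_mul, transEdges_mul, h₁, h₂, h₃, h₄]⟩

theorem finite_krCon_quotient [Finite A] [Finite T] : Finite (krCon ψ).Quotient := by
  have : Finite (WithOne T) := inferInstanceAs (Finite (Option T))
  refine Finite.of_injective
    (Quotient.lift (fun u => (ψ u, transEdges ψ u)) fun _ _ h => Prod.ext h.1 h.2 :
      (krCon ψ).Quotient → T × Set (KREdge A T)) ?_
  intro x y
  induction x, y using Quotient.inductionOn₂ with
  | _ u v => exact fun h => Quotient.sound ⟨congrArg Prod.fst h, congrArg Prod.snd h⟩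

end Words

theorem exists_KRExp {A T : Type} [Finite A] [Semigroup T] [Finite T]
    (ψ : FreeSemigroup A →ₙ* T) : Nonempty (KRExp ψ) :=
  have := finite_krCon_quotient ψ
  ⟨{ K := (krCon ψ).Quotient
     ψKR := ⟨fun u => (u : (krCon ψ).Quotient), fun _ _ => rfl⟩
     π :=
      { toFun := Quotient.lift (fun u => ψ u) fun _ _ h => h.1
        map_mul' := fun x y => by
          induction x, y using Quotient.inductionOn₂ with
          | _ u v => exact map_mul ψ u v }
     surj := Quotient.exists_rep
     ker := fun _ _ => (krCon ψ).eq
     proj := rfl }⟩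

/-- Every finite semigroup `T` has a Karnofsky–Rhodes expansion: take `T` itself as the alphabet. -/
theorem exists_KRData (T : Type) [Semigroup T] [Finite T] : Nonempty (KRData T) :=
  let ψ : FreeSemigroup T →ₙ* T := FreeSemigroup.lift id
  (exists_KRExp ψ).map fun E =>
    { A := T, ψ := ψ, surjψ := fun t => ⟨FreeSemigroup.of t, rfl⟩, E := E }

/-! ### Functoriality of the expansion -/

/-- A position in a concatenation of blocks `g a` is a position inside one of the blocks. -/
theorem flatMap_eq_append_cons_iff {A B : Type} (g : A → List B) (L : List A) (w₁ w₂ : List B)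
    (b : B) :
    L.flatMap g = w₁ ++ b :: w₂ ↔
      ∃ L₁ a L₂ x₁ x₂, L = L₁ ++ a :: L₂ ∧ g a = x₁ ++ b :: x₂ ∧
        w₁ = L₁.flatMap g ++ x₁ ∧ w₂ = x₂ ++ L₂.flatMap g := by
  constructor
  · induction L generalizing w₁ with
    | nil => simp
    | cons a L ih =>
      intro h
      have hin : ∀ l, w₁ = g a ++ l → L.flatMap g = l ++ b :: w₂ →
          ∃ L₁ a' L₂ x₁ x₂, a :: L = L₁ ++ a' :: L₂ ∧ g a' = x₁ ++ b :: x₂ ∧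
            w₁ = L₁.flatMap g ++ x₁ ∧ w₂ = x₂ ++ L₂.flatMap g := by
        intro l hw hl
        obtain ⟨L₁, a', L₂, x₁, x₂, rfl, h₁, rfl, h₂⟩ := ih l hl
        exact ⟨a :: L₁, a', L₂, x₁, x₂, rfl, h₁, by simp [hw], h₂⟩
      rw [List.flatMap_cons] at h
      rcases List.append_eq_append_iff.1 h with ⟨l, h₁, h₂⟩ | ⟨l, h₁, h₂⟩
      · exact hin l h₁ h₂
      · cases l with
        | nil => exact hin [] (by simpa using h₁.symm) (by simpa using h₂.symm)
        | cons c l =>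
          obtain ⟨rfl, rfl⟩ : b = c ∧ w₂ = l ++ L.flatMap g := by simpa using h₂
          exact ⟨[], a, L, w₁, l, rfl, h₁, rfl, rfl⟩
  · rintro ⟨L₁, a, L₂, x₁, x₂, rfl, h, rfl, rfl⟩
    simp [h]

section Functor

variable {A B S T : Type} [Semigroup S] [Semigroup T]
  {ψ : FreeSemigroup A →ₙ* S} {χ : FreeSemigroup B →ₙ* T} {φ : S →ₙ* T}
  {f : FreeSemigroup A →ₙ* FreeSemigroup B}

theorem letters_map (f : FreeSemigroup A →ₙ* FreeSemigroup B) (u : FreeSemigroup A) :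
    letters (f u) = (letters u).flatMap fun a => letters (f (FreeSemigroup.of a)) := by
  induction u using FreeSemigroup.recOnMul with
  | ih1 a =>
    change _ = [a].flatMap _
    simp
  | ih2 x y hx hy => rw [map_mul, letters_mul, letters_mul, List.flatMap_append, hx, hy]

theorem wordImg_block (hf : χ.comp f = φ.comp ψ) (a : A) :
    wordImg χ (letters (f (FreeSemigroup.of a))) = WithOne.mapMulHom φ (letterImg ψ a) := by
  rw [wordImg_letters]
  exact congrArg _ (DFunLike.congr_fun hf (FreeSemigroup.of a))

theorem wordImg_flatMap (hf : χ.comp f = φ.comp ψ) (L : List A) :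
    wordImg χ (L.flatMap fun a => letters (f (FreeSemigroup.of a))) =
      WithOne.mapMulHom φ (wordImg ψ L) := by
  induction L with
  | nil => simp [wordImg_nil]
  | cons a L ih => rw [List.flatMap_cons, wordImg_append, ih, wordImg_cons, map_mul,
      wordImg_block hf]

/-- The map `(s, t) ↦ (φ s, φ t)` on vertices preserves the existence of directed paths. -/
theorem reach_map (hf : χ.comp f = φ.comp ψ) {v w : KRVtx S}
    (h : Relation.ReflTransGen (KRStep ψ) v w) :
    Relation.ReflTransGen (KRStep χ)
      (WithOne.mapMulHom φ v.1, WithOne.mapMulHom φ v.2)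
      (WithOne.mapMulHom φ w.1, WithOne.mapMulHom φ w.2) := by
  induction h with
  | refl => exact .refl
  | tail _ hs ih =>
    refine ih.trans ?_
    obtain ⟨a, h₁, h₂⟩ := hs
    rw [← h₁, h₂, map_mul, map_mul, ← wordImg_block hf]
    exact reach_word _ _ _ _

/-- The edges of the path of `Γ_χ`, labelled by `f a`, that replaces the edge `e` of `Γ_ψ`
with label `a`. -/
def blockEdges (χ : FreeSemigroup B →ₙ* T) (φ : S →ₙ* T)
    (f : FreeSemigroup A →ₙ* FreeSemigroup B) (e : KREdge A S) : Set (KREdge B T) :=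
  {e' | ∃ (x₁ x₂ : List B) (b : B), letters (f (FreeSemigroup.of e.2.1)) = x₁ ++ b :: x₂ ∧
    e' = ((WithOne.mapMulHom φ e.1.1 * wordImg χ x₁,
            wordImg χ (b :: x₂) * WithOne.mapMulHom φ e.2.2.2), b,
          (WithOne.mapMulHom φ e.1.1 * wordImg χ (x₁ ++ [b]),
            wordImg χ x₂ * WithOne.mapMulHom φ e.2.2.2))}

theorem pathEdges_map (hf : χ.comp f = φ.comp ψ) (u : FreeSemigroup A) :
    pathEdges χ (f u) = {e' | ∃ e ∈ pathEdges ψ u, e' ∈ blockEdges χ φ f e} := by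
  ext e'
  constructor
  · rintro ⟨w₁, w₂, b, hl, rfl⟩
    rw [letters_map, flatMap_eq_append_cons_iff] at hl
    obtain ⟨L₁, a, L₂, x₁, x₂, hL, hx, rfl, rfl⟩ := hl
    refine ⟨_, ⟨L₁, L₂, a, hL, rfl⟩, x₁, x₂, b, hx, ?_⟩
    simp [wordImg_append, wordImg_cons, wordImg_flatMap hf, mul_assoc]
  · rintro ⟨_, ⟨L₁, L₂, a, hL, rfl⟩, x₁, x₂, b, hx, rfl⟩
    refine ⟨_, _, b, (letters_map f u).trans ((flatMap_eq_append_cons_iff _ _ _ _ _).2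
      ⟨L₁, a, L₂, x₁, x₂, hL, hx, rfl, rfl⟩), ?_⟩
    simp [wordImg_append, wordImg_cons, wordImg_flatMap hf, mul_assoc]

/-- If `e` lies on a closed path of `Γ_ψ`, then each edge of the path replacing `e` lies on a closed
path of `Γ_χ`. -/
theorem reach_block (hf : χ.comp f = φ.comp ψ) {e : KREdge A S} (he : IsKREdge ψ e)
    (h : Relation.ReflTransGen (KRStep ψ) e.2.2 e.1) {e' : KREdge B T}
    (he' : e' ∈ blockEdges χ φ f e) : Relation.ReflTransGen (KRStep χ) e'.2.2 e'.1 := by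
  obtain ⟨x₁, x₂, b, hx, rfl⟩ := he'
  have hblock := wordImg_block hf e.2.1
  rw [hx] at hblock
  -- finish the block, return along the image of the closed path, then start the block again
  have h₁ := reach_word χ x₂ (WithOne.mapMulHom φ e.1.1 * wordImg χ (x₁ ++ [b]))
    (WithOne.mapMulHom φ e.2.2.2)
  have h₂ := reach_map hf h
  have h₃ := reach_word χ x₁ (WithOne.mapMulHom φ e.1.1)
    (wordImg χ (b :: x₂) * WithOne.mapMulHom φ e.2.2.2)
  rw [mul_assoc, ← wordImg_append, List.append_assoc, List.singleton_append, hblock, ← map_mul,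
    he.1] at h₁
  rw [← mul_assoc, ← wordImg_append, hblock, ← map_mul, ← he.2] at h₃
  exact (h₁.trans h₂).trans h₃

theorem transEdges_map (hf : χ.comp f = φ.comp ψ) (u : FreeSemigroup A) :
    transEdges χ (f u) = {e' | (∃ e ∈ transEdges ψ u, e' ∈ blockEdges χ φ f e) ∧
      ¬ Relation.ReflTransGen (KRStep χ) e'.2.2 e'.1} := by
  ext e'
  rw [mem_transEdges_iff, pathEdges_map hf]
  constructor
  · rintro ⟨⟨e, he, hb⟩, h⟩
    exact ⟨⟨e, (mem_transEdges_iff ψ).2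
      ⟨he, fun hr => h (reach_block hf (isKREdge_of_mem ψ he) hr hb)⟩, hb⟩, h⟩
  · rintro ⟨⟨e, he, hb⟩, h⟩
    exact ⟨⟨e, he.1, hb⟩, h⟩

end Functor

/-- Every homomorphism `φ : S → T` lifts to a homomorphism between any expansions of `S` and of `T`:
the chosen generators of `S` can be sent to words over the generators of `T` because `A⁺` is free and
`D'.ψ` is onto. -/
theorem exists_transfer {S T : Type} [Semigroup S] [Semigroup T] (D : KRData S) (D' : KRData T)
    (φ : S →ₙ* T) : ∃ τ : D.E.K →ₙ* D'.E.K, D'.E.π.comp τ = φ.comp D.E.π := by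
  let f : FreeSemigroup D.A →ₙ* FreeSemigroup D'.A :=
    FreeSemigroup.lift fun a => Function.surjInv D'.surjψ (φ (D.ψ (FreeSemigroup.of a)))
  have hf : D'.ψ.comp f = φ.comp D.ψ :=
    FreeSemigroup.hom_ext (funext fun a => Function.surjInv_eq D'.surjψ _)
  have hker : ∀ u v, D.E.ψKR u = D.E.ψKR v → D'.E.ψKR (f u) = D'.E.ψKR (f v) := by
    intro u v h
    obtain ⟨h₁, h₂⟩ := (D.E.ker u v).1 h
    refine (D'.E.ker _ _).2 ⟨?_, by rw [transEdges_map hf, transEdges_map hf, h₂]⟩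
    have hu := DFunLike.congr_fun hf u
    have hv := DFunLike.congr_fun hf v
    simp only [MulHom.comp_apply] at hu hv
    rw [hu, hv, h₁]
  have hinv := Function.surjInv_eq D.E.surj
  refine ⟨⟨fun x => D'.E.ψKR (f (Function.surjInv D.E.surj x)), fun x y => ?_⟩, ?_⟩
  · rw [← map_mul, ← map_mul]
    exact hker _ _ (by rw [map_mul, hinv, hinv, hinv])
  · ext x
    change D'.E.π (D'.E.ψKR (f _)) = φ (D.E.π x)
    have h₁ := fun u => DFunLike.congr_fun D'.E.proj u
    have h₂ := fun u => DFunLike.congr_fun D.E.proj u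
    have h₃ := fun u => DFunLike.congr_fun hf u
    simp only [MulHom.comp_apply] at h₁ h₂ h₃
    rw [h₁, h₃, ← h₂, hinv]

/-! ### Finite KR-covers -/


/-- A finite semigroup is a KR-cover iff the canonical projection from
some (equivalently, any) two-sided Karnofsky–Rhodes expansion of it splits. -/
theorem finite_KRCover_iff (S : Type) [Semigroup S] [Finite S] :
    (IsKRCover (discTopSgr S) ↔
      ∃ (D : KRData S) (θ : S →ₙ* D.E.K), D.E.π.comp θ = MulHom.id S) ∧
    (IsKRCover (discTopSgr S) →
      ∀ D : KRData S, ∃ θ : S →ₙ* D.E.K, D.E.π.comp θ = MulHom.id S) := by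
  have split_of_cover : IsKRCover (discTopSgr S) →
      ∃ (D : KRData S) (θ : S →ₙ* D.E.K), D.E.π.comp θ = MulHom.id S := by
    intro h
    have hc : ContinuousDisc (S := (discTopSgr S).carrier) (MulHom.id S) := continuous_bot
    obtain ⟨D, θ, -, hθ⟩ := (h S ⟨MulHom.id S, hc, Function.surjective_id⟩).2 (MulHom.id S) hc
      Function.surjective_id
    exact ⟨D, θ, hθ⟩
  refine ⟨⟨split_of_cover, ?_⟩, ?_⟩
  · rintro ⟨D, θ, hθ⟩ T _ _ hT
    refine ⟨hT, fun φ _ _ => ?_⟩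
    obtain ⟨D'⟩ := exists_KRData T
    obtain ⟨τ, hτ⟩ := exists_transfer D D' (φ : S →ₙ* T)
    refine ⟨D', τ.comp θ, continuous_bot, ?_⟩
    ext s
    exact (DFunLike.congr_fun hτ (θ s)).trans (congrArg φ (DFunLike.congr_fun hθ s))
  · intro h D'
    obtain ⟨D, θ, hθ⟩ := split_of_cover h
    obtain ⟨τ, hτ⟩ := exists_transfer D D' (MulHom.id S)
    refine ⟨τ.comp θ, ?_⟩
    rw [← MulHom.comp_assoc, hτ, MulHom.comp_assoc, hθ]
    rfl
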